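/- Let m₀ > 0 and let M : [0, ∞) → ℝ be monotone nondecreasing with M(t) ≥ m₀ for all t ≥ 0. If F, G ∈ L^r(Ω, μ) are real-valued functions that are not equal μ-almost everywhere, then M(ρ(F))·a(F, F − G) − M(ρ(G))·a(G, F − G) > 0; that is, the Kirchhoff-weighted operator F ↦ M(ρ(F))·a(F, ·) is strictly monotone on L^r(Ω, μ). -/

import Mathlib

open MeasureTheory

/-- The modular `ρ(F) = ∫ |F|^r dμ`. -/
noncomputable def kirchhoffModular {Ω : Type*} [MeasurableSpace Ω]
    (μ : Measure Ω) (r : ℝ) (F : Ω → ℝ) : ℝ :=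
  ∫ ω, |F ω| ^ r ∂μ

/-- The pairing `a(F, G) = ∫ |F|^{r-2} F G dμ`, with `|F|^{r-2} F` interpreted as
`sign(F) |F|^{r-1}` (equal to `0` where `F = 0`). -/
noncomputable def kirchhoffPairing {Ω : Type*} [MeasurableSpace Ω]
    (μ : Measure Ω) (r : ℝ) (F G : Ω → ℝ) : ℝ :=
  ∫ ω, Real.sign (F ω) * |F ω| ^ (r - 1) * G ω ∂μ

/-!
The operator `F ↦ M(ρ(F)) a(F, ·)` is a duality mapping of `L^r` with gauge
`φ(t) = M(t) t^{1 - 1/r}`, written as a function of the modular `t = ρ(F) = ‖F‖^r`. Since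
`a(F, F) = ρ(F)` and, by Hölder, `|a(F, G)| ≤ ρ(F)^{1 - 1/r} ρ(G)^{1/r}`, the quantity in question
is at least `(φ(ρ(F)) - φ(ρ(G))) (‖F‖ - ‖G‖)`, which is positive as soon as `φ` is strictly
increasing and `‖F‖ ≠ ‖G‖`. When `‖F‖ = ‖G‖` the two weights agree and factor out, and positivity
comes from the strict monotonicity of `x ↦ |x|^{r-2} x`.
-/

lemma sub_mul_sub_pos_of_strictMonoOn {α R : Type*} [LinearOrder α] [Ring R] [PartialOrder R]
    [IsStrictOrderedRing R] {f g : α → R} {s : Set α} (hf : StrictMonoOn f s)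
    (hg : StrictMonoOn g s) {x y : α} (hx : x ∈ s) (hy : y ∈ s) (hxy : x ≠ y) :
    0 < (f x - f y) * (g x - g y) := by
  rcases hxy.lt_or_gt with h | h
  · exact mul_pos_of_neg_of_neg (sub_neg.2 (hf hx hy h)) (sub_neg.2 (hg hx hy h))
  · exact mul_pos (sub_pos.2 (hf hy hx h)) (sub_pos.2 (hg hy hx h))

section Real

variable {p : ℝ}

lemma strictMonoOn_mul_rpow {M : ℝ → ℝ} (hp : 0 < p) (hM : MonotoneOn M (Set.Ioi 0))
    (hMpos : ∀ t, 0 < t → 0 < M t) : StrictMonoOn (fun t ↦ M t * t ^ p) (Set.Ici 0) := by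
  intro s (hs : 0 ≤ s) t _ hst
  have ht : 0 < t := hs.trans_lt hst
  rcases hs.eq_or_lt with rfl | hs
  · simpa [Real.zero_rpow hp.ne'] using mul_pos (hMpos t ht) (Real.rpow_pos_of_pos ht p)
  · exact mul_lt_mul' (hM hs ht hst.le) (Real.rpow_lt_rpow hs.le hst hp)
      (Real.rpow_nonneg hs.le p) (hMpos t ht)

lemma abs_sign_mul_abs_rpow (hp : p ≠ 0) (x : ℝ) : |Real.sign x * |x| ^ p| = |x| ^ p := by
  rcases eq_or_ne x 0 with rfl | hx
  · simp [Real.zero_rpow hp]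
  · have hsign : |Real.sign x| = 1 := by
      rcases Real.sign_apply_eq_of_ne_zero x hx with h | h <;> simp [h]
    rw [abs_mul, hsign, one_mul, abs_of_nonneg (by positivity)]

lemma sign_mul_abs_rpow_mul_self (hp : p + 1 ≠ 0) (x : ℝ) :
    Real.sign x * |x| ^ p * x = |x| ^ (p + 1) := by
  rcases lt_trichotomy x 0 with hx | rfl | hx
  · rw [Real.sign_of_neg hx, Real.rpow_add_one (abs_pos_of_neg hx).ne', abs_of_neg hx]
    ring
  · simp [Real.zero_rpow hp]
  · rw [Real.sign_of_pos hx, Real.rpow_add_one (abs_pos_of_pos hx).ne', abs_of_pos hx, one_mul]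

lemma strictMono_sign_mul_abs_rpow (hp : 0 < p) :
    StrictMono fun x : ℝ ↦ Real.sign x * |x| ^ p := by
  refine strictMono_of_odd_strictMonoOn_nonneg (fun x ↦ by simp [Real.sign_neg]) ?_
  intro x (hx : 0 ≤ x) y _ hxy
  have hy : 0 < y := hx.trans_lt hxy
  rcases hx.eq_or_lt with rfl | hx
  · simpa [Real.sign_of_pos hy] using Real.rpow_pos_of_pos (abs_pos_of_pos hy) p
  · simpa [Real.sign_of_pos, abs_of_pos, hx, hy] using Real.rpow_lt_rpow hx.le hxy hp

end Real

section Modular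

variable {Ω : Type*} [MeasurableSpace Ω] {μ : Measure Ω} {r : ℝ} {F G : Ω → ℝ}

lemma integral_sub_mul_sub_pos_of_strictMono {φ : ℝ → ℝ} (hφ : StrictMono φ)
    (hint : Integrable (fun ω ↦ (φ (F ω) - φ (G ω)) * (F ω - G ω)) μ) (hFG : ¬ F =ᵐ[μ] G) :
    0 < ∫ ω, (φ (F ω) - φ (G ω)) * (F ω - G ω) ∂μ := by
  have pos_of_ne (ω : Ω) (h : F ω ≠ G ω) : 0 < (φ (F ω) - φ (G ω)) * (F ω - G ω) :=
    sub_mul_sub_pos_of_strictMonoOn (hφ.strictMonoOn Set.univ) strictMonoOn_id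
      (Set.mem_univ _) (Set.mem_univ _) h
  have nonneg (ω : Ω) : 0 ≤ (φ (F ω) - φ (G ω)) * (F ω - G ω) := by
    rcases eq_or_ne (F ω) (G ω) with h | h
    · simp [h]
    · exact (pos_of_ne ω h).le
  rw [integral_pos_iff_support_of_nonneg nonneg hint]
  exact (pos_iff_ne_zero.2 hFG).trans_le (measure_mono fun ω h ↦ (pos_of_ne ω h).ne')

lemma integrable_abs_rpow (hr : 0 < r) (hF : MemLp F (ENNReal.ofReal r) μ) :
    Integrable (fun ω ↦ |F ω| ^ r) μ := by
  simpa [hr.le] using hF.integrable_norm_rpow (by simpa using hr) ENNReal.ofReal_ne_top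

lemma kirchhoffModular_nonneg : 0 ≤ kirchhoffModular μ r F :=
  integral_nonneg fun _ ↦ by positivity

lemma kirchhoffModular_eq_zero_iff (hr : 0 < r) (hF : MemLp F (ENNReal.ofReal r) μ) :
    kirchhoffModular μ r F = 0 ↔ F =ᵐ[μ] 0 := by
  rw [kirchhoffModular, integral_eq_zero_iff_of_nonneg (fun _ ↦ by positivity)
    (integrable_abs_rpow hr hF)]
  simp [Filter.EventuallyEq, Real.rpow_eq_zero (abs_nonneg _) hr.ne']

end Modular

section Pairing

variable {Ω : Type*} [MeasurableSpace Ω] {μ : Measure Ω} {r : ℝ} {F G H : Ω → ℝ}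

lemma memLp_sign_mul_abs_rpow {p : ℝ} {q : ENNReal} (hp : 0 < p) (hF : MemLp F q μ) :
    MemLp (fun ω ↦ Real.sign (F ω) * |F ω| ^ p) (q / ENNReal.ofReal p) μ := by
  have hmeas : AEStronglyMeasurable (fun ω ↦ Real.sign (F ω) * |F ω| ^ p) μ :=
    ((strictMono_sign_mul_abs_rpow hp).monotone.measurable.comp_aemeasurable
      hF.1.aemeasurable).aestronglyMeasurable
  refine (hF.norm_rpow_div (ENNReal.ofReal p)).congr_norm hmeas (.of_forall fun ω ↦ ?_)
  simp only [Real.norm_eq_abs, ENNReal.toReal_ofReal hp.le, abs_sign_mul_abs_rpow hp.ne',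
    Real.abs_rpow_of_nonneg (abs_nonneg _), abs_abs]

lemma memLp_conjExponent_sign_mul_abs_rpow (hr : 1 < r) (hF : MemLp F (ENNReal.ofReal r) μ) :
    MemLp (fun ω ↦ Real.sign (F ω) * |F ω| ^ (r - 1)) (ENNReal.ofReal r.conjExponent) μ := by
  rw [Real.conjExponent, ENNReal.ofReal_div_of_pos (sub_pos.2 hr)]
  exact memLp_sign_mul_abs_rpow (sub_pos.2 hr) hF

lemma integrable_sign_mul_abs_rpow_mul (hr : 1 < r) (hF : MemLp F (ENNReal.ofReal r) μ)
    (hG : MemLp G (ENNReal.ofReal r) μ) :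
    Integrable (fun ω ↦ Real.sign (F ω) * |F ω| ^ (r - 1) * G ω) μ :=
  have := (Real.HolderConjugate.conjExponent hr).symm.ennrealOfReal
  (memLp_conjExponent_sign_mul_abs_rpow hr hF).integrable_mul hG

lemma kirchhoffPairing_self (hr : r ≠ 0) : kirchhoffPairing μ r F F = kirchhoffModular μ r F := by
  simp [kirchhoffPairing, kirchhoffModular, sign_mul_abs_rpow_mul_self (p := r - 1) (by simpa)]

lemma kirchhoffPairing_sub_right (hr : 1 < r) (hF : MemLp F (ENNReal.ofReal r) μ)
    (hG : MemLp G (ENNReal.ofReal r) μ) (hH : MemLp H (ENNReal.ofReal r) μ) :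
    kirchhoffPairing μ r F (G - H) = kirchhoffPairing μ r F G - kirchhoffPairing μ r F H := by
  simp only [kirchhoffPairing, Pi.sub_apply, mul_sub]
  exact integral_sub (integrable_sign_mul_abs_rpow_mul hr hF hG)
    (integrable_sign_mul_abs_rpow_mul hr hF hH)

lemma abs_kirchhoffPairing_le (hr : 1 < r) (hF : MemLp F (ENNReal.ofReal r) μ)
    (hG : MemLp G (ENNReal.ofReal r) μ) :
    |kirchhoffPairing μ r F G| ≤
      kirchhoffModular μ r F ^ (1 - r⁻¹) * kirchhoffModular μ r G ^ r⁻¹ := by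
  have hconj := Real.HolderConjugate.conjExponent hr
  have rpow_rpow (ω : Ω) : (|F ω| ^ (r - 1)) ^ r.conjExponent = |F ω| ^ r := by
    rw [← Real.rpow_mul (abs_nonneg _), hconj.sub_one_mul_conj]
  calc |kirchhoffPairing μ r F G|
      ≤ ∫ ω, ‖Real.sign (F ω) * |F ω| ^ (r - 1)‖ * ‖G ω‖ ∂μ := by
        simpa only [kirchhoffPairing, Real.norm_eq_abs, abs_mul] using
          abs_integral_le_integral_abs
            (f := fun ω ↦ Real.sign (F ω) * |F ω| ^ (r - 1) * G ω) (μ := μ)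
    _ ≤ _ := integral_mul_norm_le_Lp_mul_Lq hconj.symm
        (memLp_conjExponent_sign_mul_abs_rpow hr hF) hG
    _ = kirchhoffModular μ r F ^ (1 - r⁻¹) * kirchhoffModular μ r G ^ r⁻¹ := by
        simp only [Real.norm_eq_abs, abs_sign_mul_abs_rpow hconj.sub_one_ne_zero, rpow_rpow,
          one_div, hconj.one_sub_inv, kirchhoffModular]

lemma kirchhoffPairing_sub_kirchhoffPairing_pos (hr : 1 < r)
    (hF : MemLp F (ENNReal.ofReal r) μ) (hG : MemLp G (ENNReal.ofReal r) μ)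
    (hFG : ¬ F =ᵐ[μ] G) :
    0 < kirchhoffPairing μ r F (F - G) - kirchhoffPairing μ r G (F - G) := by
  have hintF := integrable_sign_mul_abs_rpow_mul hr hF (hF.sub hG)
  have hintG := integrable_sign_mul_abs_rpow_mul hr hG (hF.sub hG)
  rw [kirchhoffPairing, kirchhoffPairing, ← integral_sub hintF hintG]
  have hint := hintF.sub hintG
  simp only [Pi.sub_def, ← sub_mul] at hint ⊢
  exact integral_sub_mul_sub_pos_of_strictMono
    (strictMono_sign_mul_abs_rpow (sub_pos.2 hr)) hint hFG

lemma mul_kirchhoffPairing_le {m : ℝ} (hr : 1 < r) (hF : MemLp F (ENNReal.ofReal r) μ)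
    (hG : MemLp G (ENNReal.ofReal r) μ) (hm : 0 ≤ m * kirchhoffModular μ r F ^ (1 - r⁻¹)) :
    m * kirchhoffPairing μ r F G ≤
      m * kirchhoffModular μ r F ^ (1 - r⁻¹) * kirchhoffModular μ r G ^ r⁻¹ := by
  -- A negative `m` forces `ρ(F) = 0`, and then both sides vanish.
  have hFnonneg : 0 ≤ kirchhoffModular μ r F ^ (1 - r⁻¹) :=
    Real.rpow_nonneg kirchhoffModular_nonneg _
  calc m * kirchhoffPairing μ r F G
      ≤ |m| * |kirchhoffPairing μ r F G| := (le_abs_self _).trans_eq (abs_mul _ _)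
    _ ≤ |m| * (kirchhoffModular μ r F ^ (1 - r⁻¹) * kirchhoffModular μ r G ^ r⁻¹) := by
        gcongr
        exact abs_kirchhoffPairing_le hr hF hG
    _ = |m * kirchhoffModular μ r F ^ (1 - r⁻¹)| * kirchhoffModular μ r G ^ r⁻¹ := by
        rw [abs_mul, abs_of_nonneg hFnonneg, mul_assoc]
    _ = _ := by rw [abs_of_nonneg hm]

lemma sub_mul_sub_le_mul_kirchhoffPairing_sub {m n : ℝ} (hr : 1 < r)
    (hF : MemLp F (ENNReal.ofReal r) μ) (hG : MemLp G (ENNReal.ofReal r) μ)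
    (hm : 0 ≤ m * kirchhoffModular μ r F ^ (1 - r⁻¹))
    (hn : 0 ≤ n * kirchhoffModular μ r G ^ (1 - r⁻¹)) :
    (m * kirchhoffModular μ r F ^ (1 - r⁻¹) - n * kirchhoffModular μ r G ^ (1 - r⁻¹)) *
        (kirchhoffModular μ r F ^ r⁻¹ - kirchhoffModular μ r G ^ r⁻¹) ≤
      m * kirchhoffPairing μ r F (F - G) - n * kirchhoffPairing μ r G (F - G) := by
  have hr0 : r ≠ 0 := (zero_lt_one.trans hr).ne'
  have rpow_mul_rpow (H : Ω → ℝ) : kirchhoffModular μ r H ^ (1 - r⁻¹) *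
      kirchhoffModular μ r H ^ r⁻¹ = kirchhoffModular μ r H := by
    rw [← Real.rpow_add' kirchhoffModular_nonneg (by simp), sub_add_cancel, Real.rpow_one]
  rw [kirchhoffPairing_sub_right hr hF hF hG, kirchhoffPairing_sub_right hr hG hF hG,
    kirchhoffPairing_self hr0, kirchhoffPairing_self hr0]
  linear_combination mul_kirchhoffPairing_le hr hF hG hm + mul_kirchhoffPairing_le hr hG hF hn +
    m * rpow_mul_rpow F + n * rpow_mul_rpow G

end Pairing

theorem kirchhoff_weighted_operator_strictly_monotone_general
    {Ω : Type*} [MeasurableSpace Ω] {μ : Measure Ω} {r : ℝ} (hr : 1 < r) {M : ℝ → ℝ}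
    (hM : StrictMonoOn (fun t ↦ M t * t ^ (1 - r⁻¹)) (Set.Ici 0)) {F G : Ω → ℝ}
    (hF : MemLp F (ENNReal.ofReal r) μ) (hG : MemLp G (ENNReal.ofReal r) μ)
    (hFG : ¬ F =ᵐ[μ] G) :
    0 < M (kirchhoffModular μ r F) * kirchhoffPairing μ r F (F - G) -
        M (kirchhoffModular μ r G) * kirchhoffPairing μ r G (F - G) := by
  have hr0 : 0 < r := zero_lt_one.trans hr
  have gauge_zero : M 0 * 0 ^ (1 - r⁻¹) = 0 := by
    rw [Real.zero_rpow (sub_pos.2 (inv_lt_one_of_one_lt₀ hr)).ne', mul_zero]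
  have gauge_nonneg {t : ℝ} (ht : 0 ≤ t) : 0 ≤ M t * t ^ (1 - r⁻¹) :=
    gauge_zero.symm.trans_le (hM.monotoneOn Set.self_mem_Ici ht ht)
  rcases eq_or_ne (kirchhoffModular μ r F) (kirchhoffModular μ r G) with hρ | hρ
  · have hρpos : 0 < kirchhoffModular μ r G := kirchhoffModular_nonneg.lt_of_ne' fun h ↦
      hFG <| ((kirchhoffModular_eq_zero_iff hr0 hF).1 (hρ.trans h)).trans
        ((kirchhoffModular_eq_zero_iff hr0 hG).1 h).symm
    have hMpos : 0 < M (kirchhoffModular μ r G) :=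
      pos_of_mul_pos_left (gauge_zero.symm.trans_lt (hM Set.self_mem_Ici hρpos.le hρpos))
        (Real.rpow_nonneg hρpos.le _)
    rw [hρ, ← mul_sub]
    exact mul_pos hMpos (kirchhoffPairing_sub_kirchhoffPairing_pos hr hF hG hFG)
  · exact (sub_mul_sub_pos_of_strictMonoOn hM
      (Real.strictMonoOn_rpow_Ici_of_exponent_pos (inv_pos.2 hr0))
      kirchhoffModular_nonneg kirchhoffModular_nonneg hρ).trans_le
        (sub_mul_sub_le_mul_kirchhoffPairing_sub hr hF hG
          (gauge_nonneg kirchhoffModular_nonneg) (gauge_nonneg kirchhoffModular_nonneg))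

/-- **Strict monotonicity of the Kirchhoff-weighted operator.** If `M` is monotone
nondecreasing with `M(t) ≥ m₀ > 0` for all `t ≥ 0`, and `F, G ∈ L^r(Ω, μ)` are not equal
`μ`-a.e., then `M(ρ(F))·a(F, F − G) − M(ρ(G))·a(G, F − G) > 0`. -/
theorem kirchhoff_weighted_operator_strictly_monotone
    {Ω : Type*} [MeasurableSpace Ω] (μ : Measure Ω) (r : ℝ) (hr : 1 < r)
    (m₀ : ℝ) (hm₀ : 0 < m₀) (M : ℝ → ℝ) (hM : Monotone M)
    (hMm₀ : ∀ t : ℝ, 0 ≤ t → m₀ ≤ M t) (F G : Ω → ℝ)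
    (hF : MemLp F (ENNReal.ofReal r) μ) (hG : MemLp G (ENNReal.ofReal r) μ)
    (hFG : ¬ F =ᵐ[μ] G) :
    0 < M (kirchhoffModular μ r F) * kirchhoffPairing μ r F (F - G) -
        M (kirchhoffModular μ r G) * kirchhoffPairing μ r G (F - G) := by
  exact kirchhoff_weighted_operator_strictly_monotone_general hr (strictMonoOn_mul_rpow
    (sub_pos.2 (inv_lt_one_of_one_lt₀ hr)) (hM.monotoneOn _)
    fun t ht ↦ hm₀.trans_le (hMm₀ t ht.le)) hF hG hFG
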